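/- arXiv:1404.0464 — 2 statements merged into one kernel-verified Lean document; each statement's English description precedes it below -/
import Mathlib

section
/- Let n ≥ 2 be even. Then for all k₁,…,k_{2n−1} ∈ ℤ², the fully antisymmetrized sh-Jacobi sum of the (co)sine n-algebra vanishes: Σ_{σ∈S_{2n−1}} sgn(σ)·[[T_{k_{σ(1)}},…,T_{k_{σ(n)}}], T_{k_{σ(n+1)}},…,T_{k_{σ(2n−1)}}] = 0, where the inner and outer brackets are the recursive n-brackets in A; i.e. for even n the (co)sine n-algebra is a sh-n-Lie algebra. -/
/-- The wedge `m∧n = m₁n₂ - m₂n₁` on ℤ². -/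
def wedge (m n : ℤ × ℤ) : ℤ := m.1 * n.2 - m.2 * n.1

/-- The recursively defined n-bracket in an associative ring (with fuel parameter):
`[A₁] = A₁` and `[A₁,…,A_n] = Σ_{s=1}^{n} (-1)^{s+1} A_s·[A₁,…,Â_s,…,A_n]`. -/
def nbrAux {R : Type*} [Ring R] : ℕ → List R → R
  | 0, _ => 0
  | _ + 1, [] => 0
  | _ + 1, [a] => a
  | fuel + 1, l => ∑ s ∈ Finset.range l.length,
      (-1 : R) ^ s * (l.getD s 0 * nbrAux fuel (l.eraseIdx s))

/-- The n-bracket `[A₁,…,A_n]`. -/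
def nbr {R : Type*} [Ring R] (l : List R) : R := nbrAux l.length l

lemma eraseIdx_ofFn' {R : Type*} {n : ℕ} (a : Fin (n+1) → R) (s : Fin (n+1)) :
    (List.ofFn a).eraseIdx s = List.ofFn (fun j => a (s.succAbove j)) := by
  apply List.ext_getElem
  · simp [List.length_eraseIdx]
    omega
  · intro i h1 h2
    simp only [List.getElem_eraseIdx, List.getElem_ofFn]
    simp only [List.length_ofFn] at h2
    split_ifs with h
    · congr 1; rw [Fin.succAbove_of_castSucc_lt _ _ (by simpa [Fin.lt_def] using h)]; rfl
    · congr 1; rw [Fin.succAbove_of_le_castSucc _ _ (by simpa [Fin.le_def] using h)]; rfl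

/-- peel the value at zero off a permutation, order preserving on the remaining values -/
def permE (n : ℕ) : Fin (n+1) × Equiv.Perm (Fin n) → Equiv.Perm (Fin (n+1)) :=
  fun q => (Fin.cycleRange q.1)⁻¹ * Equiv.Perm.decomposeFin.symm (0, q.2)

lemma permE_zero {n : ℕ} (q) : permE n q 0 = q.1 := by
  simp [permE, Equiv.Perm.inv_def]

lemma permE_succ {n : ℕ} (q) (j) : permE n q (Fin.succ j) = q.1.succAbove (q.2 j) := by
  simp [permE, Equiv.Perm.inv_def]

lemma permE_sign {n : ℕ} (q) : ((Equiv.Perm.sign (permE n q) : ℤˣ) : ℤ) = (-1)^(q.1:ℕ) * Equiv.Perm.sign q.2 := by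
  simp [permE, Fin.sign_cycleRange]

lemma permE_bij (n : ℕ) : Function.Bijective (permE n) := by
  rw [Fintype.bijective_iff_injective_and_card]
  constructor
  · intro q r h
    have h0 : q.1 = r.1 := by rw [← permE_zero q, ← permE_zero r, h]
    refine Prod.ext h0 (Equiv.ext fun j => ?_)
    have := permE_succ q j
    rw [h, permE_succ, h0] at this
    exact (Fin.succAbove_right_injective this).symm
  · simp [Fintype.card_perm, Nat.factorial_succ]

lemma nbr_ofFn {R : Type*} [Ring R] (n : ℕ) : ∀ a : Fin (n+1) → R, nbr (List.ofFn a) =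
    ∑ τ : Equiv.Perm (Fin (n+1)), (Equiv.Perm.sign τ : ℤ) • (List.ofFn (fun j => a (τ j))).prod := by
  induction n with
  | zero => intro a; simp [nbr, nbrAux]
  | succ n ih =>
    intro a
    rw [← (permE_bij (n+1)).sum_comp, Fintype.sum_prod_type]
    have : nbr (List.ofFn a) = ∑ s ∈ Finset.range (n+2),
      (-1 : R) ^ s * ((List.ofFn a).getD s 0 * nbrAux (n+1) ((List.ofFn a).eraseIdx s)) := by
      unfold nbr
      simp only [List.length_ofFn]
      rw [nbrAux]
      · simp
      · intro h; simp at h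
      · intro x h; simpa using congrArg List.length h
    rw [this, Finset.sum_range]
    refine Finset.sum_congr rfl fun s _ => ?_
    have e : nbrAux (n+1) ((List.ofFn a).eraseIdx s) = nbr (List.ofFn (fun j => a (s.succAbove j))) := by
      rw [eraseIdx_ofFn']; simp [nbr]
    rw [e, ih, Finset.mul_sum, Finset.mul_sum]
    refine Finset.sum_congr rfl fun τ _ => ?_
    rw [permE_sign, List.ofFn_succ (f := fun j => a (permE (n + 1) (s, τ) j)), List.prod_cons, permE_zero]
    simp only [permE_succ]
    simp only [zsmul_eq_mul, Int.cast_mul, Int.cast_pow, Int.cast_neg, Int.cast_one, mul_assoc]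
    congr 1
    rw [(Int.commute_cast _ _).left_comm]
    have hg : (List.ofFn a).getD (s : ℕ) 0 = a s := by
      rw [List.getD_eq_getElem _ _ (by simp; omega), List.getElem_ofFn]
    rw [hg]

lemma map_formPerm_pow {N : ℕ} (L : List (Fin N)) (h : L.Nodup) (r : ℕ) :
    L.map (L.formPerm ^ r) = L.rotate r := by
  apply List.ext_getElem
  · simp
  · intro i h1 h2
    simp only [List.length_map] at h1
    simp [List.formPerm_pow_apply_getElem _ h, List.getElem_rotate]

lemma sign_formPerm_odd {N : ℕ} (L : List (Fin N)) (h : L.Nodup) (hodd : Odd L.length)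
    (h2 : 2 ≤ L.length) : Equiv.Perm.sign L.formPerm = 1 := by
  rw [(List.isCycle_formPerm h h2).sign, List.support_formPerm_of_nodup _ h,
    List.toFinset_card_of_nodup h, hodd.neg_one_pow]
  · simp
  · rintro x rfl; simp at h2

/-- the alternating sum of a word -/
def altW {A : Type*} [Ring A] {N : ℕ} (x : Fin N → A) (L : List (Fin N)) : A :=
  ∑ σ : Equiv.Perm (Fin N), (Equiv.Perm.sign σ : ℤ) • (L.map fun i => x (σ i)).prod

lemma altW_rotate {A : Type*} [Ring A] {N : ℕ} (x : Fin N → A) (L : List (Fin N))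
    (h : L.Nodup) (hodd : Odd L.length) (h2 : 2 ≤ L.length) (r : ℕ) :
    altW x (L.rotate r) = altW x L := by
  unfold altW
  rw [← map_formPerm_pow L h r]
  symm
  rw [← Equiv.sum_comp (Equiv.mulRight (L.formPerm ^ r))]
  refine Finset.sum_congr rfl fun σ _ => ?_
  simp [sign_formPerm_odd L h hodd h2, Function.comp_def]

lemma flatten_singletons {α : Type*} {m : ℕ} (g : Fin m → α) :
    (List.ofFn fun j => [g j]).flatten = List.ofFn g := by
  induction m with
  | zero => simp
  | succ m ih => simp [List.ofFn_succ, ih]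

lemma prod_blocks {A ι : Type*} [Ring A] {m : ℕ} (y : ι → A) (b : Fin m → List ι) :
    (List.ofFn fun j => ((b j).map y).prod).prod = ((List.ofFn b).flatten.map y).prod := by
  induction m with
  | zero => simp
  | succ m ih => simp [List.ofFn_succ, ih]

lemma ofFn_finRotate {α : Type*} {m : ℕ} (b : Fin (m+1) → α) :
    List.ofFn (fun j => b (finRotate (m+1) j)) = (List.ofFn fun j : Fin m => b j.succ) ++ [b 0] := by
  rw [List.ofFn_succ']
  simp [List.concat_eq_append]

lemma sum_blocks {A : Type*} [Ring A] [Algebra ℂ A] {N m : ℕ} (x : Fin N → A)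
    (b : Fin (m+1) → List (Fin N)) (hm : Odd m) (hnd : (List.ofFn b).flatten.Nodup)
    (hodd : Odd (List.ofFn b).flatten.length) (h2 : 2 ≤ (List.ofFn b).flatten.length) :
    ∑ ρ : Equiv.Perm (Fin (m+1)), (Equiv.Perm.sign ρ : ℤ) •
      altW x (List.ofFn fun j => b (ρ j)).flatten = 0 := by
  set S := ∑ ρ : Equiv.Perm (Fin (m+1)), (Equiv.Perm.sign ρ : ℤ) •
      altW x (List.ofFn fun j => b (ρ j)).flatten with hS
  have key : S = -S := by
    conv_lhs => rw [hS, ← Equiv.sum_comp (Equiv.mulRight (finRotate (m+1)))]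
    rw [hS, ← Finset.sum_neg_distrib]
    refine Finset.sum_congr rfl fun ρ _ => ?_
    have hp : (List.ofFn fun j => b (ρ j)).flatten.Perm (List.ofFn b).flatten :=
      (Equiv.Perm.ofFn_comp_perm ρ b).flatten
    have hr : (List.ofFn fun j => b ((ρ * finRotate (m+1)) j)).flatten =
        (List.ofFn fun j => b (ρ j)).flatten.rotate (b (ρ 0)).length := by
      have := ofFn_finRotate (fun j => b (ρ j))
      simp only [Equiv.Perm.mul_apply]
      rw [this, List.ofFn_succ (f := fun j => b (ρ j)), List.flatten_cons,
        List.rotate_append_length_eq]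
      simp
    rw [Equiv.coe_mulRight, hr, altW_rotate _ _ (hp.nodup_iff.2 hnd) (by rwa [hp.length_eq])
      (by rwa [hp.length_eq])]
    simp [sign_finRotate, hm.neg_one_pow]
  have h0 : (2 : ℂ) • S = 0 := by
    rw [two_smul]; nth_rewrite 1 [key]; simp
  exact (smul_eq_zero_iff_right (two_ne_zero)).1 h0

lemma prod_cons_sum {A ι : Type*} [Ring A] {m : ℕ} (t : Finset ι) (e : ι → ℤ) (B : ι → A)
    (c : Fin m → A) (ρ : Equiv.Perm (Fin (m+1))) :
    (List.ofFn fun j => (Fin.cons (∑ i ∈ t, e i • B i) c : Fin (m+1) → A) (ρ j)).prod =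
      ∑ i ∈ t, e i • (List.ofFn fun j => (Fin.cons (B i) c : Fin (m+1) → A) (ρ j)).prod := by
  let M : MultilinearMap ℤ (fun _ : Fin (m+1) => A) A :=
    (MultilinearMap.mkPiAlgebraFin ℤ (m+1) A).domDomCongr ρ
  have hM : ∀ v : Fin (m+1) → A, (List.ofFn fun j => v (ρ j)).prod = M v := fun v => by
    simp [M]
  have hc : ∀ z : A, (Fin.cons z c : Fin (m+1) → A) = Function.update (Fin.cons 0 c) 0 z :=
    fun z => by rw [Fin.update_cons_zero]
  simp only [hM]
  rw [hc, MultilinearMap.map_update_sum]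
  refine Finset.sum_congr rfl fun i _ => ?_
  rw [MultilinearMap.map_update_smul, ← hc]

/-- for even `n ≥ 2` the (co)sine n-algebra is a sh-n-Lie algebra: the
fully antisymmetrized sh-Jacobi sum of the n-brackets of the generators vanishes. -/
theorem stmt14 {A : Type*} [Ring A] [Algebra ℂ A] (p : ℂ) (hp : p ≠ 0)
    (T : ℤ × ℤ → A) (hT : ∀ m n : ℤ × ℤ, T n * T m = p ^ wedge m n • T (n + m))
    (n : ℕ) (hn : 2 ≤ n) (hev : Even n) (k : Fin (2 * n - 1) → ℤ × ℤ) :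
    ∑ σ : Equiv.Perm (Fin (2 * n - 1)), (Equiv.Perm.sign σ : ℤ) •
      nbr ((nbr (List.ofFn fun j : Fin n => T (k (σ (Fin.castLE (by omega) j))))) ::
        (List.ofFn fun j : Fin (n - 1) =>
          T (k (σ ⟨n + (j : ℕ), by have := j.isLt; omega⟩)))) = 0 := by
  obtain ⟨m, rfl⟩ : ∃ m, n = m + 1 := ⟨n - 1, by omega⟩
  have hm : Odd m := by
    rcases Nat.even_or_odd m with h | h
    · exact absurd hev (by simpa [Nat.even_add_one] using h)
    · exact h
  have hle : m + 1 ≤ 2 * (m + 1) - 1 := by omega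
  let sh : Fin m → Fin (2 * (m + 1) - 1) := fun j => ⟨m + 1 + (j : ℕ), by have := j.isLt; omega⟩
  let x : Fin (2 * (m + 1) - 1) → A := fun i => T (k i)
  let b : Equiv.Perm (Fin (m+1)) → Fin (m+1) → List (Fin (2 * (m + 1) - 1)) := fun τ =>
    Fin.cons (List.ofFn fun j => Fin.castLE hle (τ j)) (fun j => [sh j])
  have hfl : ∀ τ, (List.ofFn (b τ)).flatten =
      (List.ofFn fun j => Fin.castLE hle (τ j)) ++ List.ofFn sh := by
    intro τ
    simp only [b, List.ofFn_succ, Fin.cons_zero, Fin.cons_succ, List.flatten_cons,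
      flatten_singletons]
  have hlen : ∀ τ, (List.ofFn (b τ)).flatten.length = 2 * m + 1 := by
    intro τ; rw [hfl]; simp; omega
  have hnd : ∀ τ, (List.ofFn (b τ)).flatten.Nodup := by
    intro τ
    rw [hfl, List.nodup_append']
    refine ⟨List.nodup_ofFn.2 fun i j h => ?_, List.nodup_ofFn.2 fun i j h => ?_, ?_⟩
    · exact τ.injective (Fin.castLE_injective hle h)
    · simpa [sh, Fin.ext_iff] using h
    · intro i h1 h2
      obtain ⟨j, rfl⟩ := (List.mem_ofFn' _ _).1 h1
      obtain ⟨l, hl⟩ := (List.mem_ofFn' _ _).1 h2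
      have := congrArg Fin.val hl
      have h3 := (τ j).isLt
      simp [sh] at this
      omega
  have hterm : ∀ σ : Equiv.Perm (Fin (2 * (m + 1) - 1)),
      nbr ((nbr (List.ofFn fun j : Fin (m+1) => x (σ (Fin.castLE hle j)))) ::
        (List.ofFn fun j : Fin m => x (σ (sh j)))) =
      ∑ τ : Equiv.Perm (Fin (m+1)), ∑ ρ : Equiv.Perm (Fin (m+1)),
        (Equiv.Perm.sign τ : ℤ) • (Equiv.Perm.sign ρ : ℤ) •
          ((List.ofFn fun j => b τ (ρ j)).flatten.map fun i => x (σ i)).prod := by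
    intro σ
    have h1 : (nbr (List.ofFn fun j : Fin (m+1) => x (σ (Fin.castLE hle j)))) ::
        (List.ofFn fun j : Fin m => x (σ (sh j))) = List.ofFn (Fin.cons
          (nbr (List.ofFn fun j : Fin (m+1) => x (σ (Fin.castLE hle j))))
          (fun j : Fin m => x (σ (sh j))) : Fin (m+1) → A) := by
      rw [List.ofFn_succ]; simp
    rw [h1, nbr_ofFn, nbr_ofFn, Finset.sum_comm]
    refine Finset.sum_congr rfl fun ρ _ => ?_
    rw [prod_cons_sum, Finset.smul_sum]
    refine Finset.sum_congr rfl fun τ _ => ?_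
    rw [smul_comm, ← prod_blocks (fun i => x (σ i)) (fun j => b τ (ρ j))]
    congr 4
    funext j
    refine Fin.cases ?_ (fun i => ?_) (ρ j)
    · simp [b, List.map_ofFn, Function.comp_def]
    · simp [b]
  have hmain := fun τ => sum_blocks x (b τ) hm (hnd τ) (by rw [hlen]; exact ⟨m, rfl⟩)
    (by rw [hlen]; omega)
  have hfin : ∑ σ : Equiv.Perm (Fin (2 * (m + 1) - 1)), (Equiv.Perm.sign σ : ℤ) •
      nbr ((nbr (List.ofFn fun j : Fin (m+1) => x (σ (Fin.castLE hle j)))) ::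
        (List.ofFn fun j : Fin m => x (σ (sh j)))) = 0 := by
    simp only [hterm, Finset.smul_sum]
    rw [Finset.sum_comm]
    refine Finset.sum_eq_zero fun τ _ => ?_
    rw [Finset.sum_comm]
    have h := congrArg (fun z => (Equiv.Perm.sign τ : ℤ) • z) (hmain τ)
    simp only [altW, Finset.smul_sum, smul_zero] at h
    rw [← h]
    refine Finset.sum_congr rfl fun ρ _ => Finset.sum_congr rfl fun σ _ => ?_
    simp only [smul_smul]
    congr 1
    ring
  exact hfin
end

section
/- Let q be a nonzero complex number with q² ≠ 1, let n ≥ 2 be even, and define the structure constants of the q-deformed SDiff(T²) n-algebra by F_n(i₁,…,i_n) = (q − q^{-1})^{-1}·Σ_{σ∈S_n} sgn(σ)·q^{Σ_{1≤k<s≤n} i_{σ(k)}∧i_{σ(s)}} for i₁,…,i_n ∈ ℤ². Then for all k₁,…,k_{2n−1} ∈ ℤ², the fully antisymmetrized sh-Jacobi sum vanishes: Σ_{σ∈S_{2n−1}} sgn(σ)·F_n(k_{σ(1)},…,k_{σ(n)})·F_n(k_{σ(1)}+⋯+k_{σ(n)}, k_{σ(n+1)},…,k_{σ(2n−1)}) =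 0; i.e. for even n the q-deformed SDiff(T²) n-algebra is a sh-n-Lie algebra. -/
/-- The structure constants of the q-deformed SDiff(T²) n-algebra:
`F_n(i₁,…,i_n) = (q-q⁻¹)⁻¹ Σ_{σ∈S_n} sgn(σ) q^{Σ_{1≤k<s≤n} i_{σ(k)}∧i_{σ(s)}}`. -/
noncomputable def Fsd (q : ℂ) (n : ℕ) (i : Fin n → ℤ × ℤ) : ℂ :=
  (q - q⁻¹)⁻¹ *
    ∑ σ : Equiv.Perm (Fin n), ((Equiv.Perm.sign σ : ℤ) : ℂ) *
      q ^ (∑ pr ∈ Finset.univ.filter (fun pr : Fin n × Fin n => pr.1 < pr.2),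
        wedge (i (σ pr.1)) (i (σ pr.2)))

section helpers
open Equiv Finset

noncomputable def Ew {N : ℕ} (v : Fin N → ℤ × ℤ) : ℤ :=
  ∑ a, ∑ b, if a < b then wedge (v a) (v b) else 0

lemma Ew_eq {N : ℕ} (v : Fin N → ℤ × ℤ) :
    (∑ pr ∈ Finset.univ.filter (fun pr : Fin N × Fin N => pr.1 < pr.2),
        wedge (v pr.1) (v pr.2)) = Ew v := by
  rw [Finset.sum_filter, Fintype.sum_prod_type]; rfl

lemma wedge_add_left (a b c : ℤ × ℤ) : wedge (a + b) c = wedge a c + wedge b c := by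
  simp [wedge]; ring

lemma wedge_add_right (a b c : ℤ × ℤ) : wedge a (b + c) = wedge a b + wedge a c := by
  simp [wedge]; ring

lemma wedge_anti (a b : ℤ × ℤ) : wedge a b = - wedge b a := by
  simp [wedge]; ring

lemma wedge_zero_left (a : ℤ × ℤ) : wedge 0 a = 0 := by simp [wedge]

lemma wedge_zero_right (a : ℤ × ℤ) : wedge a 0 = 0 := by simp [wedge]

lemma wedge_self (a : ℤ × ℤ) : wedge a a = 0 := by simp [wedge]; ring

lemma wedge_sum_left {ι : Type*} (s : Finset ι) (f : ι → ℤ × ℤ) (c : ℤ × ℤ) :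
    wedge (∑ i ∈ s, f i) c = ∑ i ∈ s, wedge (f i) c := by
  classical
  induction s using Finset.induction_on with
  | empty => simp [wedge_zero_left]
  | insert a s ha ih => rw [Finset.sum_insert ha, Finset.sum_insert ha, wedge_add_left, ih]

lemma wedge_sum_right {ι : Type*} (s : Finset ι) (f : ι → ℤ × ℤ) (c : ℤ × ℤ) :
    wedge c (∑ i ∈ s, f i) = ∑ i ∈ s, wedge c (f i) := by
  classical
  induction s using Finset.induction_on with
  | empty => simp [wedge_zero_right]
  | insert a s ha ih => rw [Finset.sum_insert ha, Finset.sum_insert ha, wedge_add_right, ih]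

lemma Ew_succ {N : ℕ} (v : Fin (N + 1) → ℤ × ℤ) :
    Ew v = wedge (v 0) (∑ i : Fin N, v i.succ) + Ew (fun i : Fin N => v i.succ) := by
  unfold Ew
  rw [Fin.sum_univ_succ]
  congr 1
  · rw [Fin.sum_univ_succ, wedge_sum_right]; simp
  · refine Finset.sum_congr rfl fun a _ => ?_
    rw [Fin.sum_univ_succ]; simp

lemma Ew_castSucc {N : ℕ} (v : Fin (N + 1) → ℤ × ℤ) :
    Ew v = Ew (fun i : Fin N => v i.castSucc)
      + wedge (∑ i : Fin N, v i.castSucc) (v (Fin.last N)) := by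
  unfold Ew
  rw [Fin.sum_univ_castSucc, wedge_sum_left]
  have h : (∑ b, if Fin.last N < b then wedge (v (Fin.last N)) (v b) else 0) = 0 :=
    Finset.sum_eq_zero fun b _ => if_neg (not_lt.mpr (Fin.le_last b))
  rw [h, add_zero, ← Finset.sum_add_distrib]
  refine Finset.sum_congr rfl fun a _ => ?_
  rw [Fin.sum_univ_castSucc]; simp [Fin.castSucc_lt_last]

lemma Ew_add {a b : ℕ} (v : Fin (a + b) → ℤ × ℤ) :
    Ew v = Ew (fun i : Fin a => v (Fin.castAdd b i)) + Ew (fun i : Fin b => v (Fin.natAdd a i))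
      + wedge (∑ i : Fin a, v (Fin.castAdd b i)) (∑ i : Fin b, v (Fin.natAdd a i)) := by
  unfold Ew
  rw [Fin.sum_univ_add, wedge_sum_left]
  have h1 : ∀ i : Fin a, (∑ c, if Fin.castAdd b i < c then wedge (v (Fin.castAdd b i)) (v c) else 0)
      = (∑ c : Fin a, if i < c then wedge (v (Fin.castAdd b i)) (v (Fin.castAdd b c)) else 0)
        + wedge (v (Fin.castAdd b i)) (∑ i : Fin b, v (Fin.natAdd a i)) := by
    intro i
    rw [Fin.sum_univ_add, wedge_sum_right]
    congr 1
    refine Finset.sum_congr rfl fun c _ => ?_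
    rw [if_pos]
    simp only [Fin.lt_def, Fin.val_castAdd, Fin.val_natAdd]; omega
  have h2 : ∀ i : Fin b, (∑ c, if Fin.natAdd a i < c then wedge (v (Fin.natAdd a i)) (v c) else 0)
      = (∑ c : Fin b, if i < c then wedge (v (Fin.natAdd a i)) (v (Fin.natAdd a c)) else 0) := by
    intro i
    rw [Fin.sum_univ_add, Finset.sum_eq_zero, zero_add]
    · refine Finset.sum_congr rfl fun c _ => ?_
      simp
    · intro c _
      rw [if_neg]
      simp only [Fin.lt_def, Fin.val_castAdd, Fin.val_natAdd]; omega
  simp only [h1, h2, Finset.sum_add_distrib]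
  ring

lemma Ew_rot {N : ℕ} (v : Fin (N + 1) → ℤ × ℤ) :
    Ew (v ∘ finRotate (N + 1)) = Ew v - 2 * wedge (v 0) (∑ i, v i) := by
  have h1 : ∀ i : Fin N, (v ∘ finRotate (N + 1)) i.castSucc = v i.succ := by
    intro i; simp [Fin.coeSucc_eq_succ]
  have h2 : (v ∘ finRotate (N + 1)) (Fin.last N) = v 0 := by simp
  rw [Ew_castSucc, Ew_succ v, Fin.sum_univ_succ]
  simp only [h1, h2]
  rw [wedge_add_right, wedge_self, wedge_anti (∑ i : Fin N, v i.succ)]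
  ring

lemma Ew_rot_pow {N : ℕ} (M : ℕ) (hM : M ≤ N) (v : Fin N → ℤ × ℤ) :
    Ew (v ∘ ⇑((finRotate N) ^ M)) =
      Ew v - 2 * wedge (∑ t : Fin M, v (Fin.castLE hM t)) (∑ i, v i) := by
  induction M generalizing v with
  | zero => simp [wedge_zero_left]
  | succ M ih =>
    obtain ⟨N, rfl⟩ : ∃ N', N = N' + 1 := ⟨N - 1, by omega⟩
    have : v ∘ ⇑((finRotate (N+1)) ^ (M + 1)) =
        (v ∘ finRotate (N+1)) ∘ ⇑((finRotate (N+1)) ^ M) := by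
      rw [pow_succ']; rfl
    rw [this, ih (by omega), Ew_rot, Fin.sum_univ_succ (n := M)]
    have h0 : ∑ i, (v ∘ finRotate (N+1)) i = ∑ i, v i :=
      Equiv.sum_comp (finRotate (N+1)) v
    have h1 : ∀ t : Fin M, (v ∘ finRotate (N+1)) (Fin.castLE (by omega) t)
        = v (Fin.castLE hM t.succ) := by
      intro t
      have := t.isLt
      simp only [Function.comp]
      congr 1
      have e := finRotate_of_lt (n := N) (k := (t : ℕ)) (by omega)
      exact e
    have h2 : Fin.castLE hM 0 = 0 := rfl
    simp only [h0, h1, h2]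
    rw [wedge_add_left]; ring

/-- letters of the outer bracket -/
def Iw {m : ℕ} (v : Fin ((m + 1) + m) → ℤ × ℤ) : Fin (m + 1) → ℤ × ℤ :=
  Fin.cons (∑ t : Fin (m + 1), v (Fin.castAdd m t)) (fun j => v (Fin.natAdd (m + 1) j))

def Pw {m : ℕ} (v : Fin ((m + 1) + m) → ℤ × ℤ) : Fin (m + 1) → ℤ × ℤ :=
  fun t => v (Fin.castAdd m t)

lemma sum_Iw {m : ℕ} (v : Fin ((m + 1) + m) → ℤ × ℤ) : ∑ i, Iw v i = ∑ i, v i := by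
  rw [Fin.sum_univ_succ, Fin.sum_univ_add]; simp [Iw]

lemma Ew_word {m : ℕ} (v : Fin ((m + 1) + m) → ℤ × ℤ) (j : ℕ) (hj : j ≤ m) :
    Ew (Pw v) + Ew (Iw v ∘ ⇑(finRotate (m + 1) ^ (j + 1))) =
      Ew (v ∘ ⇑(finRotate ((m + 1) + m) ^ ((m + 1) + j))) := by
  rw [Ew_rot_pow _ (by omega), Ew_rot_pow _ (by omega), sum_Iw, Ew_add v, Ew_succ (Iw v),
    Fin.sum_univ_succ (n := j), Fin.sum_univ_add (a := m + 1) (b := j)]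
  have e0 : Iw v 0 = ∑ t : Fin (m + 1), v (Fin.castAdd m t) := rfl
  have e1 : ∀ t : Fin m, Iw v t.succ = v (Fin.natAdd (m + 1) t) := fun t => rfl
  have e2 : ∀ h, ∀ t : Fin j, Iw v (Fin.castLE h t.succ) = v (Fin.natAdd (m + 1) (Fin.castLE hj t)) :=
    fun h t => rfl
  have e3 : ∀ h, ∀ t : Fin j, v (Fin.castLE h (Fin.natAdd (m+1) t)) =
    v (Fin.natAdd (m + 1) (Fin.castLE hj t)) := fun h t => rfl
  have e4 : ∀ h, ∀ t : Fin (m+1), v (Fin.castLE h (Fin.castAdd j t)) =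
    v (Fin.castAdd m t) := fun h t => rfl
  have e5 : ∀ h : j + 1 ≤ m + 1, Iw v (Fin.castLE h 0) = ∑ t : Fin (m + 1), v (Fin.castAdd m t) :=
    fun h => rfl
  simp only [e0, e1, e2, e3, e4, e5]
  unfold Pw
  ring

/-- block permutation -/
def bp {m : ℕ} (τ : Perm (Fin (m + 1))) (h : Perm (Fin m)) : Perm (Fin ((m + 1) + m)) :=
  finSumFinEquiv.permCongr (Equiv.sumCongr τ h)

lemma sign_bp {m : ℕ} (τ : Perm (Fin (m + 1))) (h : Perm (Fin m)) :
    Perm.sign (bp τ h) = Perm.sign τ * Perm.sign h := by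
  unfold bp
  rw [Perm.sign_permCongr]
  exact Perm.sign_sumCongr τ h

lemma Pw_bp {m : ℕ} (v : Fin ((m + 1) + m) → ℤ × ℤ) (τ : Perm (Fin (m + 1))) (h : Perm (Fin m)) :
    Pw (v ∘ bp τ h) = Pw v ∘ τ := by
  ext1 t; simp [Pw, bp, Equiv.permCongr_apply]

lemma Iw_bp {m : ℕ} (v : Fin ((m + 1) + m) → ℤ × ℤ) (τ : Perm (Fin (m + 1))) (h : Perm (Fin m)) :
    Iw (v ∘ bp τ h) = Iw v ∘ Perm.decomposeFin.symm (0, h) := by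
  ext1 t
  refine Fin.cases ?_ (fun t => ?_) t
  · simp only [Iw, bp, Equiv.permCongr_apply, Fin.cons_zero, Function.comp,
      Perm.decomposeFin_symm_apply_zero]
    simpa using Equiv.sum_comp τ (fun t => v (Fin.castAdd m t))
  · simp [Iw, bp, Equiv.permCongr_apply]

lemma sign_rot_odd {m N : ℕ} (h : N = 2 * m + 1) : Perm.sign (finRotate N) = 1 := by
  subst h; rw [sign_finRotate]; simp

noncomputable def Dw (q : ℂ) {m : ℕ} (k : Fin ((m + 1) + m) → ℤ × ℤ) (τ ρ : Perm (Fin (m + 1))) : ℂ :=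
  ∑ σ : Perm (Fin ((m + 1) + m)), ((Perm.sign σ : ℤ) : ℂ) *
    q ^ (Ew (Pw (k ∘ σ) ∘ τ) + Ew (Iw (k ∘ σ) ∘ ρ))

noncomputable def Aw (q : ℂ) {N : ℕ} (k : Fin N → ℤ × ℤ) : ℂ :=
  ∑ σ : Perm (Fin N), ((Perm.sign σ : ℤ) : ℂ) * q ^ (Ew (k ∘ σ))

lemma Dw_val (q : ℂ) {m : ℕ} (k : Fin ((m + 1) + m) → ℤ × ℤ) (τ : Perm (Fin (m + 1)))
    (h : Perm (Fin m)) (j : ℕ) (hj : j ≤ m) :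
    Dw q k τ (Perm.decomposeFin.symm (0, h) * finRotate (m + 1) ^ (j + 1)) =
      ((Perm.sign τ * Perm.sign h : ℤ) : ℂ) * Aw q k := by
  set g := bp τ h * finRotate ((m + 1) + m) ^ ((m + 1) + j) with hg
  have hs : Perm.sign g = Perm.sign τ * Perm.sign h := by
    rw [hg, Perm.sign_mul, map_pow, sign_rot_odd (m := m) (by omega), one_pow, mul_one, sign_bp]
  unfold Dw Aw
  rw [← Equiv.sum_comp (Equiv.mulRight g) (fun σ => ((Perm.sign σ : ℤ) : ℂ) * q ^ (Ew (k ∘ σ))),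
    Finset.mul_sum]
  refine Finset.sum_congr rfl fun σ _ => ?_
  have e : Ew (Pw (k ∘ σ) ∘ τ) +
      Ew (Iw (k ∘ σ) ∘ ⇑(Perm.decomposeFin.symm (0, h) * finRotate (m + 1) ^ (j + 1))) =
      Ew (k ∘ ⇑(σ * g)) := by
    have := Ew_word ((k ∘ σ) ∘ bp τ h) j hj
    rw [Pw_bp, Iw_bp] at this
    exact this
  rw [e]
  simp only [Equiv.coe_mulRight, Perm.sign_mul, hs]
  rw [show k ∘ ⇑(σ * g) = k ∘ ⇑σ ∘ ⇑g from rfl]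
  generalize q ^ (Ew (k ∘ ⇑σ ∘ ⇑g)) = Z
  have h1 : ((Perm.sign τ : ℤ) : ℂ) * ((Perm.sign τ : ℤ) : ℂ) = 1 := by
    rcases Int.units_eq_one_or (Perm.sign τ) with h | h <;> simp [h]
  have h2 : ((Perm.sign h : ℤ) : ℂ) * ((Perm.sign h : ℤ) : ℂ) = 1 := by
    rcases Int.units_eq_one_or (Perm.sign h) with h | h <;> simp [h]
  push_cast
  linear_combination (-Z * ((Perm.sign σ : ℤ) : ℂ)) * (((Perm.sign h : ℤ) : ℂ) * ((Perm.sign h : ℤ) : ℂ)) * h1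
    - Z * ((Perm.sign σ : ℤ) : ℂ) * h2

lemma rot_pow_zero {m : ℕ} (p : ℕ) (hp : p ≤ m) :
    (finRotate (m + 1) ^ p) 0 = ⟨p, by omega⟩ := by
  induction p with
  | zero => rfl
  | succ p ih =>
    rw [pow_succ', Perm.mul_apply, ih (by omega)]
    exact finRotate_of_lt (by omega)

lemma rot_pow_card (m : ℕ) : finRotate (m + 1) ^ (m + 1) = 1 := by
  have h0 : (finRotate (m + 1) ^ (m + 1)) 0 = 0 := by
    rw [pow_succ', Perm.mul_apply, rot_pow_zero m le_rfl]
    exact finRotate_last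
  ext1 x
  have hx : x = (finRotate (m + 1) ^ (x : ℕ)) 0 := by
    rw [rot_pow_zero _ (by have := x.isLt; omega)]
  rw [hx, ← Perm.mul_apply, ← pow_add, Nat.add_comm _ (x : ℕ), pow_add, Perm.mul_apply, h0]; rfl

lemma perm_decomp {m : ℕ} (ρ : Perm (Fin (m + 1))) :
    ∃ (h : Perm (Fin m)) (j : ℕ), j ≤ m ∧
      ρ = Perm.decomposeFin.symm (0, h) * finRotate (m + 1) ^ (j + 1) := by
  set p := ρ⁻¹ 0 with hp
  have hpl := p.isLt
  set g := ρ * finRotate (m + 1) ^ (p : ℕ) with hg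
  have hg0 : g 0 = 0 := by
    rw [hg, Perm.mul_apply, rot_pow_zero _ (by omega)]
    show ρ p = 0
    simp [hp]
  obtain ⟨⟨a, h⟩, hh⟩ := Perm.decomposeFin.symm.surjective g
  have ha : a = 0 := by
    rw [← hg0, ← hh, Perm.decomposeFin_symm_apply_zero]
  subst ha
  refine ⟨h, m - p, by omega, ?_⟩
  rw [hh, hg, mul_assoc, ← pow_add, show (p : ℕ) + (m - p + 1) = m + 1 by omega, rot_pow_card,
    mul_one]

lemma Dw_rot (q : ℂ) {m : ℕ} (k : Fin ((m + 1) + m) → ℤ × ℤ) (τ ρ : Perm (Fin (m + 1))) :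
    Dw q k τ (ρ * finRotate (m + 1)) = Dw q k τ ρ := by
  obtain ⟨h, j, hj, rfl⟩ := perm_decomp ρ
  rw [Dw_val q k τ h j hj, mul_assoc, ← pow_succ]
  rcases hj.lt_or_eq with hj | rfl
  · exact Dw_val q k τ h (j + 1) hj
  · rw [pow_succ, rot_pow_card, one_mul]
    simpa using Dw_val q k τ h 0 (by omega)

lemma main_sum (q : ℂ) (hq : q ≠ 0) {m : ℕ} (hm : Even (m + 1)) (k : Fin ((m + 1) + m) → ℤ × ℤ) :
    ∑ σ : Perm (Fin ((m + 1) + m)), ((Perm.sign σ : ℤ) : ℂ) *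
      (Fsd q (m + 1) (Pw (k ∘ σ)) * Fsd q (m + 1) (Iw (k ∘ σ))) = 0 := by
  have hF : ∀ i : Fin (m + 1) → ℤ × ℤ, Fsd q (m + 1) i = (q - q⁻¹)⁻¹ *
      ∑ σ : Perm (Fin (m + 1)), ((Perm.sign σ : ℤ) : ℂ) * q ^ (Ew (i ∘ σ)) := by
    intro i
    unfold Fsd
    congr 1
    refine Finset.sum_congr rfl fun σ _ => ?_
    rw [← Ew_eq]; rfl
  have hX : ∀ τ : Perm (Fin (m + 1)), ∑ ρ : Perm (Fin (m + 1)),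
      ((Perm.sign ρ : ℤ) : ℂ) * Dw q k τ ρ = 0 := by
    intro τ
    have hsgn : Perm.sign (finRotate (m + 1)) = -1 := by
      rw [sign_finRotate, Odd.neg_one_pow]
      rcases hm with ⟨r, hr⟩
      exact ⟨r - 1, by omega⟩
    have := Equiv.sum_comp (Equiv.mulRight (finRotate (m + 1)))
      (fun ρ : Perm (Fin (m + 1)) => ((Perm.sign ρ : ℤ) : ℂ) * Dw q k τ ρ)
    simp only [Equiv.coe_mulRight, Dw_rot, Perm.sign_mul, hsgn] at this
    simp only [mul_neg, mul_one, Units.val_neg, Int.cast_neg, neg_mul,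
      Finset.sum_neg_distrib] at this
    have h2 := neg_eq_self.mp this
    exact h2
  have key : ∑ σ : Perm (Fin ((m + 1) + m)), ((Perm.sign σ : ℤ) : ℂ) *
      (Fsd q (m + 1) (Pw (k ∘ σ)) * Fsd q (m + 1) (Iw (k ∘ σ))) =
      (q - q⁻¹)⁻¹ * (q - q⁻¹)⁻¹ * ∑ τ : Perm (Fin (m + 1)), ((Perm.sign τ : ℤ) : ℂ) *
        ∑ ρ : Perm (Fin (m + 1)), ((Perm.sign ρ : ℤ) : ℂ) * Dw q k τ ρ := by
    simp only [hF, Dw, Finset.mul_sum, Finset.sum_mul]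
    rw [Finset.sum_comm]
    rw [Finset.sum_comm]
    conv_rhs => rw [Finset.sum_comm]; enter [2, ρ]; rw [Finset.sum_comm]
    conv_rhs => rw [Finset.sum_comm]
    refine Finset.sum_congr rfl fun σ _ => ?_
    refine Finset.sum_congr rfl fun τ _ => ?_
    refine Finset.sum_congr rfl fun ρ _ => ?_
    rw [zpow_add₀ hq]
    ring
  rw [key]
  simp [hX]

lemma main_gen (q : ℂ) (hq : q ≠ 0) (m N : ℕ) (hN : N = (m + 1) + m) (hm : Even (m + 1))
    (k : Fin N → ℤ × ℤ) :
    ∑ σ : Equiv.Perm (Fin N), ((Equiv.Perm.sign σ : ℤ) : ℂ) *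
      (Fsd q (m + 1) (fun j => k (σ (Fin.castLE (by omega) j))) *
        Fsd q (m + 1) (fun j => if (j : ℕ) = 0
          then ∑ t : Fin (m + 1), k (σ (Fin.castLE (by omega) t))
          else k (σ ⟨(m + 1) + (j : ℕ) - 1, by have := j.isLt; omega⟩))) = 0 := by
  subst hN
  rw [← main_sum q hq hm k]
  refine Finset.sum_congr rfl fun σ _ => ?_
  congr 3
  ext1 j
  refine Fin.cases ?_ (fun t => ?_) j
  · rfl
  · rw [if_neg (by simp)]
    simp only [Iw, Fin.cons_succ, Function.comp]
    rfl

end helpers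

/-- for even `n ≥ 2` the fully antisymmetrized sh-Jacobi sum of the
structure constants of the q-deformed SDiff(T²) n-algebra vanishes, i.e. for even `n`
the q-deformed SDiff(T²) n-algebra is a sh-n-Lie algebra. -/
theorem stmt19 (q : ℂ) (hq : q ≠ 0) (hq2 : q ^ 2 ≠ 1) (n : ℕ) (hn : 2 ≤ n)
    (hev : Even n) (k : Fin (2 * n - 1) → ℤ × ℤ) :
    ∑ σ : Equiv.Perm (Fin (2 * n - 1)), ((Equiv.Perm.sign σ : ℤ) : ℂ) *
      (Fsd q n (fun j => k (σ (Fin.castLE (by omega) j))) *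
        Fsd q n (fun j => if (j : ℕ) = 0
          then ∑ t : Fin n, k (σ (Fin.castLE (by omega) t))
          else k (σ ⟨n + (j : ℕ) - 1, by have := j.isLt; omega⟩))) = 0 := by
  obtain ⟨m, rfl⟩ : ∃ m, n = m + 1 := ⟨n - 1, by omega⟩
  exact main_gen q hq m (2 * (m + 1) - 1) (by omega) hev k
end
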